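/- For every ε ∈ (0,1) there exists t₀ = t₀(ε) such that for every integer t ≥ t₀ there exists a graph G with no K_t-minor and list chromatic number χ_ℓ(G) ≥ (2-ε)t. -/

import Mathlib

/-! The graph is a clique-sum of many copies of one dense graph on `2n` vertices, with
`n ≈ t / (1 + 3 / M)` for a large constant `M`.

*The building block.* Two cliques `A` and `B` of size `n` are joined by all pairs `(a, b)` except
those with `a ∈ N b`, where the sets `N b` have size at most `n / M`. A random choice of non-edges
(each pair independently with probability `4 ^ (-M)`) has, for large `n`, the following further
property: given more than `n / M` disjoint sets of size at most `M` in `A` and equally many in `B`,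
some set of the first family has no edge to some set of the second (`exists_nonneighbours`). This
is a union bound: for fixed families the events for the `≈ (n / M) ^ 2` pairs are independent, so the
failure probability `exp (-Ω(n ^ 2))` beats the `n ^ O(n)` choices of the families.

*Gluing.* One copy of `B` is attached to `A` for each map `c : A → {0, …, 2n - 2}`. If all vertices
of `A` get the list `{0, …, 2n - 2}` and a vertex `b` of the copy `c` gets that list with the
colours `c a`, `a ∈ N b`, removed, then no proper colouring exists: on the copy belonging to the
colouring of `A`, all `2n` vertices of `A ∪ B` would need different colours
(`not_choosable_gluedGraph`). The lists have size at least `2n - 1 - n / M`.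

*No minor.* In a `K_t`-minor at most `n < t` branch sets meet `A`. The others lie in one common copy
of `B`, and at least `t - n` of them exist. As that copy has only `n` vertices, at least `t - n`
branch sets miss it and hence meet `A`. Discarding those whose trace on `A` or `B` exceeds `M`
vertices leaves more than `n / M` of both kinds, which contradicts the property of the non-edges
(`not_hasKMinor_gluedGraph`).
-/

/-- A graph `G` contains a `K_t`-minor: there are `t` pairwise disjoint nonempty vertex subsets,
each inducing a connected subgraph, with an edge of `G` between every two of them. -/
def SimpleGraph.HasKMinor {V : Type*} (G : SimpleGraph V) (t : ℕ) : Prop :=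
  ∃ Z : Fin t → Set V,
    (∀ i, (Z i).Nonempty) ∧
    Pairwise (Function.onFun Disjoint Z) ∧
    (∀ i, (G.induce (Z i)).Connected) ∧
    Pairwise fun i j => ∃ a ∈ Z i, ∃ b ∈ Z j, G.Adj a b

/-- A graph `G` is `k`-choosable if for every assignment of color lists of size at least `k`
to the vertices, there is a proper coloring choosing each vertex's color from its list. -/
def SimpleGraph.Choosable {V : Type*} (G : SimpleGraph V) (k : ℕ) : Prop :=
  ∀ L : V → Finset ℕ, (∀ v, k ≤ (L v).card) →
    ∃ c : V → ℕ, (∀ v, c v ∈ L v) ∧ ∀ u v, G.Adj u v → c u ≠ c v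

/-! ### The random bipartite graph -/

open Finset in
/-- The probability that the random subset of `E`, which contains each point independently with
probability `p`, equals `ω`. -/
noncomputable def bernoulliWeight {E : Type*} [Fintype E] [DecidableEq E] (p : ℝ) (ω : Finset E) :
    ℝ :=
  (∏ _i ∈ ω, p) * ∏ _i ∈ univ \ ω, (1 - p)

lemma bernoulliWeight_nonneg {E : Type*} [Fintype E] [DecidableEq E] {p : ℝ} (h0 : 0 ≤ p)
    (h1 : p ≤ 1) (ω : Finset E) : 0 ≤ bernoulliWeight p ω :=
  mul_nonneg (Finset.prod_nonneg fun _ _ => h0)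
    (Finset.prod_nonneg fun _ _ => sub_nonneg.2 h1)

/-- The indicator function of the event that the random set `ω` contains `U`. -/
noncomputable def containsInd {E : Type*} [DecidableEq E] (U ω : Finset E) : ℝ :=
  if U ⊆ ω then 1 else 0

section containsInd

variable {E : Type*} [DecidableEq E]

lemma containsInd_of_subset {U ω : Finset E} (h : U ⊆ ω) : containsInd U ω = 1 := if_pos h

lemma containsInd_of_not_subset {U ω : Finset E} (h : ¬ U ⊆ ω) : containsInd U ω = 0 := if_neg h

lemma containsInd_nonneg (U ω : Finset E) : 0 ≤ containsInd U ω := by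
  unfold containsInd; split_ifs <;> norm_num

lemma containsInd_le_one (U ω : Finset E) : containsInd U ω ≤ 1 := by
  unfold containsInd; split_ifs <;> norm_num

lemma containsInd_union (U U' ω : Finset E) :
    containsInd (U ∪ U') ω = containsInd U ω * containsInd U' ω := by
  have h : containsInd (U ∪ U') ω = if U ⊆ ω ∧ U' ⊆ ω then 1 else 0 :=
    if_congr Finset.union_subset_iff rfl rfl
  rw [h]
  by_cases h1 : U ⊆ ω <;> by_cases h2 : U' ⊆ ω <;> simp [containsInd, h1, h2]

end containsInd

open Finset in
lemma sum_bernoulliWeight_contains {E : Type*} [Fintype E] [DecidableEq E] (p : ℝ)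
    (U : Finset E) : ∑ ω : Finset E, bernoulliWeight p ω * containsInd U ω = p ^ U.card := by
  have h := Finset.prod_add (fun _ : E => p) (fun i => if i ∈ U then 0 else 1 - p) univ
  have hl : ∏ i : E, (p + if i ∈ U then 0 else 1 - p) = p ^ U.card := by
    have : ∀ i : E, (p + if i ∈ U then 0 else 1 - p) = if i ∈ U then p else 1 := by
      intro i; split_ifs <;> ring
    simp only [this, Finset.prod_ite_mem, Finset.univ_inter, Finset.prod_const]
  rw [← hl, h, Finset.powerset_univ]
  refine Finset.sum_congr rfl fun ω _ => ?_
  unfold bernoulliWeight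
  rw [mul_assoc]
  congr 1
  by_cases hU : U ⊆ ω
  · rw [containsInd_of_subset hU, mul_one]
    refine Finset.prod_congr rfl fun i hi => ?_
    rw [if_neg fun hiU => (Finset.mem_sdiff.1 hi).2 (hU hiU)]
  · rw [containsInd_of_not_subset hU, mul_zero]
    obtain ⟨i, hiU, hi⟩ := Finset.not_subset.1 hU
    exact (Finset.prod_eq_zero (i := i) (by simp [hi]) (by simp [hiU])).symm

open Finset in
/-- Independence: the random set contains `U` and none of the sets `D j`, `j ∈ J`, with the product
of the individual probabilities, provided all these sets are pairwise disjoint. -/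
lemma sum_bernoulliWeight_avoid {E ι : Type*} [Fintype E] [DecidableEq E] [DecidableEq ι] (p : ℝ)
    (D : ι → Finset E) (hD : Pairwise (Function.onFun Disjoint D)) (J : Finset ι) :
    ∀ U : Finset E, (∀ j ∈ J, Disjoint U (D j)) →
      ∑ ω : Finset E, bernoulliWeight p ω *
        (containsInd U ω * ∏ j ∈ J, (1 - containsInd (D j) ω)) =
      p ^ U.card * ∏ j ∈ J, (1 - p ^ (D j).card) := by
  induction J using Finset.induction_on with
  | empty => intro U _; simpa using sum_bernoulliWeight_contains p U
  | insert j J hj ih =>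
    intro U hU
    -- Inclusion-exclusion for `D j`, using the induction hypothesis for `U` and for `U ∪ D j`.
    have h1 := ih U fun i hi => hU i (mem_insert_of_mem hi)
    have h2 := ih (U ∪ D j) fun i hi => by
      rw [disjoint_union_left]
      exact ⟨hU i (mem_insert_of_mem hi), hD fun h => hj (h ▸ hi)⟩
    rw [card_union_of_disjoint (hU j (mem_insert_self _ _))] at h2
    rw [prod_insert hj]
    have : p ^ U.card * ((1 - p ^ (D j).card) * ∏ j ∈ J, (1 - p ^ (D j).card)) =
        p ^ U.card * ∏ j ∈ J, (1 - p ^ (D j).card) -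
        p ^ (U.card + (D j).card) * ∏ j ∈ J, (1 - p ^ (D j).card) := by ring
    rw [this, ← h1, ← h2, ← Finset.sum_sub_distrib]
    refine Finset.sum_congr rfl fun ω _ => ?_
    rw [prod_insert hj, containsInd_union]
    ring

/-- The numerical estimate behind the union bound: the first summand bounds the probability of a
large set `N b`, the second one the probability that some two families violate the second property
of `exists_nonneighbours`. -/
lemma union_bound_small (M : ℕ) (hM : 0 < M) (ρ : ℝ) (h0 : 0 ≤ ρ) (h1 : ρ < 1) :
    ∃ n₀ : ℕ, ∀ n ≥ n₀,
      (n : ℝ) * 2 ^ n * ((1 / 4 : ℝ) ^ M) ^ (n / M + 1) +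
        (((n / M + 1 : ℕ) : ℝ) + 1) ^ (2 * n) * ρ ^ ((n / M + 1) * (n / M + 1)) < 1 := by
  have t1 : Filter.Tendsto (fun n : ℕ => (n : ℝ) * (1 / 2 : ℝ) ^ n) Filter.atTop (nhds 0) :=
    tendsto_self_mul_const_pow_of_lt_one (by norm_num) (by norm_num)
  have t2 : Filter.Tendsto (fun r : ℕ => (2 : ℝ) ^ (2 * M) * ((r : ℝ) ^ (2 * M) * ρ ^ r))
      Filter.atTop (nhds 0) := by
    simpa using (tendsto_pow_const_mul_const_pow_of_lt_one (2 * M) h0 h1).const_mul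
      ((2 : ℝ) ^ (2 * M))
  have t3 : Filter.Tendsto (fun n : ℕ => n / M + 1) Filter.atTop Filter.atTop :=
    (Filter.tendsto_add_atTop_nat 1).comp (Nat.tendsto_div_const_atTop hM.ne')
  have e1 := t1.eventually_lt_const (show (0 : ℝ) < 1 / 4 by norm_num)
  have e2 := (t2.comp t3).eventually_lt_const (show (0 : ℝ) < 1 / 4 by norm_num)
  obtain ⟨n₀, hn₀⟩ := Filter.eventually_atTop.1 (e1.and e2)
  refine ⟨n₀, fun n hn => ?_⟩
  obtain ⟨a1, a2⟩ := hn₀ n hn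
  have hr : n ≤ M * (n / M + 1) := (Nat.lt_mul_div_succ n hM).le
  simp only [Function.comp_apply] at a2
  set r := n / M + 1 with hrdef
  have hr1 : (1 : ℝ) ≤ r := by exact_mod_cast Nat.succ_le_succ (Nat.zero_le _)
  have b1 : (n : ℝ) * 2 ^ n * ((1 / 4 : ℝ) ^ M) ^ r ≤ n * (1 / 2 : ℝ) ^ n := by
    rw [← pow_mul, mul_assoc]
    gcongr
    calc (2 : ℝ) ^ n * (1 / 4) ^ (M * r) ≤ 2 ^ n * (1 / 4) ^ n := by
          gcongr 2 ^ n * ?_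
          exact pow_le_pow_of_le_one (by norm_num) (by norm_num) hr
      _ = (1 / 2) ^ n := by rw [← mul_pow]; norm_num
  have b2 : ((r : ℝ) + 1) ^ (2 * n) * ρ ^ (r * r) ≤ 1 / 4 := by
    calc ((r : ℝ) + 1) ^ (2 * n) * ρ ^ (r * r)
        ≤ (2 * r) ^ (2 * (M * r)) * ρ ^ (r * r) := by
          gcongr ?_ * _
          calc ((r : ℝ) + 1) ^ (2 * n) ≤ (2 * r) ^ (2 * n) := by gcongr; linarith
            _ ≤ _ := pow_le_pow_right₀ (by linarith) (Nat.mul_le_mul_left 2 hr)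
      _ = (2 ^ (2 * M) * ((r : ℝ) ^ (2 * M) * ρ ^ r)) ^ r := by
          rw [mul_pow, mul_pow, mul_pow]; ring
      _ ≤ (1 / 4) ^ r := by gcongr
      _ ≤ 1 / 4 := pow_le_of_le_one (by norm_num) (by norm_num) (Nat.succ_ne_zero _)
  linarith

/-- The family of `r` disjoint sets encoded by the map `f`, which sends a point to the index of the
set containing it, or to `none`. -/
def labelClass {n r : ℕ} (f : Fin n → Option (Fin r)) (i : Fin r) : Finset (Fin n) :=
  {a | f a = some i}

lemma mem_labelClass {n r : ℕ} {f : Fin n → Option (Fin r)} {i : Fin r} {a : Fin n} :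
    a ∈ labelClass f i ↔ f a = some i := by
  simp [labelClass]

lemma labelClass_disjoint {n r : ℕ} (f : Fin n → Option (Fin r)) :
    Pairwise (Function.onFun Disjoint (labelClass f)) := by
  intro i j hij
  refine Finset.disjoint_left.2 fun a ha hb => hij ?_
  rw [mem_labelClass] at ha hb
  exact Option.some.inj (ha.symm.trans hb)

lemma exists_labelClass_eq {n r : ℕ} (S : Fin r → Finset (Fin n))
    (hS : Pairwise (Function.onFun Disjoint S)) : ∃ f, labelClass f = S := by
  classical
  refine ⟨fun a => if h : ∃ i, a ∈ S i then some h.choose else none, ?_⟩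
  funext i
  ext a
  rw [mem_labelClass]
  constructor
  · intro h
    split_ifs at h with h'
    rw [← Option.some.inj h]
    exact h'.choose_spec
  · intro h
    have h' : ∃ i, a ∈ S i := ⟨i, h⟩
    rw [dif_pos h']
    by_contra hne
    have hne' : h'.choose ≠ i := fun e => hne (congrArg some e)
    exact Finset.disjoint_left.1 (hS hne') h'.choose_spec h

open Finset in
/-- A bound for the expected number of pairs `(b, U)` with `|U| = r` and all of `U × {b}` in the
random set. -/
lemma sum_bernoulliWeight_degree {p : ℝ} (hp0 : 0 ≤ p) (n r : ℕ) :
    ∑ ω : Finset (Fin n × Fin n), bernoulliWeight p ω *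
      ∑ b : Fin n, ∑ U ∈ powersetCard r univ, containsInd (U ×ˢ {b}) ω ≤ n * 2 ^ n * p ^ r := by
  simp only [mul_sum]
  rw [sum_comm]
  calc _ ≤ ∑ b : Fin n, (2 ^ n * p ^ r : ℝ) := by
        refine sum_le_sum fun b _ => ?_
        rw [sum_comm]
        calc _ = ∑ U ∈ powersetCard r (univ : Finset (Fin n)), p ^ r := by
              refine sum_congr rfl fun U hU => ?_
              rw [sum_bernoulliWeight_contains, card_product, card_singleton, mul_one,
                (mem_powersetCard.1 hU).2]
          _ ≤ 2 ^ n * p ^ r := by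
              rw [sum_const, nsmul_eq_mul, card_powersetCard, card_univ, Fintype.card_fin]
              gcongr
              exact_mod_cast Nat.choose_le_two_pow n r
    _ = n * 2 ^ n * p ^ r := by
        rw [sum_const, nsmul_eq_mul, card_univ, Fintype.card_fin, mul_assoc]

open Finset in
/-- A bound for the expected number of pairs of families `S`, `T` (of `r` disjoint sets of size at
most `M` each) such that no product `S i × T j` is contained in the random set. -/
lemma sum_bernoulliWeight_families {p : ℝ} (hp0 : 0 ≤ p) (hp1 : p ≤ 1) {n r M : ℕ}
    (P : Finset ((Fin n → Option (Fin r)) × (Fin n → Option (Fin r))))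
    (hP : ∀ x ∈ P, (∀ i, (labelClass x.1 i).card ≤ M) ∧ ∀ i, (labelClass x.2 i).card ≤ M) :
    ∑ ω : Finset (Fin n × Fin n), bernoulliWeight p ω * ∑ x ∈ P, ∏ ij : Fin r × Fin r,
        (1 - containsInd (labelClass x.1 ij.1 ×ˢ labelClass x.2 ij.2) ω) ≤
      ((r : ℝ) + 1) ^ (2 * n) * (1 - p ^ (M * M)) ^ (r * r) := by
  have hρ0 : 0 ≤ 1 - p ^ (M * M) := sub_nonneg.2 (pow_le_one₀ hp0 hp1)
  simp only [mul_sum]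
  rw [sum_comm]
  calc _ ≤ ∑ x ∈ P, (1 - p ^ (M * M)) ^ (r * r) := by
        refine sum_le_sum fun x hx => ?_
        have hdisj : Pairwise (Function.onFun Disjoint
            fun ij : Fin r × Fin r => labelClass x.1 ij.1 ×ˢ labelClass x.2 ij.2) := by
          rintro ⟨i, j⟩ ⟨i', j'⟩ hne
          rw [Function.onFun, disjoint_product]
          by_cases h : i = i'
          · exact Or.inr (labelClass_disjoint x.2 fun e => hne (Prod.ext h e))
          · exact Or.inl (labelClass_disjoint x.1 h)
        have := sum_bernoulliWeight_avoid p _ hdisj univ ∅ (by simp)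
        simp only [containsInd_of_subset (empty_subset _), one_mul, card_empty, pow_zero] at this
        rw [this]
        calc _ ≤ ∏ _ij : Fin r × Fin r, (1 - p ^ (M * M)) := by
              refine prod_le_prod (fun _ _ => sub_nonneg.2 (pow_le_one₀ hp0 hp1)) ?_
              intro ij _
              refine sub_le_sub_left (pow_le_pow_of_le_one hp0 hp1 ?_) _
              rw [card_product]
              exact Nat.mul_le_mul ((hP x hx).1 _) ((hP x hx).2 _)
          _ = (1 - p ^ (M * M)) ^ (r * r) := by simp
    _ ≤ ((r : ℝ) + 1) ^ (2 * n) * (1 - p ^ (M * M)) ^ (r * r) := by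
        rw [sum_const, nsmul_eq_mul]
        gcongr
        have : P.card ≤ (r + 1) ^ (2 * n) := by
          refine (card_le_univ P).trans (le_of_eq ?_)
          simp [Fintype.card_prod, two_mul, pow_add]
        exact_mod_cast this

open Finset in
/-- A sparse bipartite non-adjacency relation which contains a complete pair from any two large
families of small disjoint sets. -/
lemma exists_nonneighbours (M : ℕ) (hM : 0 < M) :
    ∃ n₀ : ℕ, ∀ n ≥ n₀, ∃ N : Fin n → Finset (Fin n),
      (∀ b, (N b).card ≤ n / M) ∧
      ∀ S T : Fin (n / M + 1) → Finset (Fin n),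
        Pairwise (Function.onFun Disjoint S) → Pairwise (Function.onFun Disjoint T) →
        (∀ i, (S i).card ≤ M) → (∀ i, (T i).card ≤ M) →
        ∃ i j, ∀ a ∈ S i, ∀ b ∈ T j, a ∈ N b := by
  classical
  set p : ℝ := (1 / 4) ^ M with hp
  have hp0 : 0 < p := by positivity
  have hp1 : p ≤ 1 := pow_le_one₀ (by norm_num) (by norm_num)
  obtain ⟨n₀, hn₀⟩ := union_bound_small M hM (1 - p ^ (M * M))
    (sub_nonneg.2 (pow_le_one₀ hp0.le hp1)) (sub_lt_self _ (by positivity))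
  refine ⟨n₀, fun n hn => ?_⟩
  have hlt := hn₀ n hn
  generalize n / M = s at hlt ⊢
  let P : Finset ((Fin n → Option (Fin (s + 1))) × (Fin n → Option (Fin (s + 1)))) :=
    {x | (∀ i, (labelClass x.1 i).card ≤ M) ∧ ∀ i, (labelClass x.2 i).card ≤ M}
  have hPmem : ∀ x, x ∈ P ↔
      (∀ i, (labelClass x.1 i).card ≤ M) ∧ ∀ i, (labelClass x.2 i).card ≤ M := by simp [P]
  clear_value P
  -- For a set `ω` of non-edges, `∑ b, X1 ω b` and `∑ x ∈ P, X2 ω x` count the violations of the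
  -- first and of the second property.
  obtain ⟨X1, hX1⟩ : ∃ X1 : Finset (Fin n × Fin n) → Fin n → ℝ, X1 = fun ω b =>
    ∑ U ∈ powersetCard (s + 1) univ, containsInd (U ×ˢ {b}) ω := ⟨_, rfl⟩
  obtain ⟨X2, hX2⟩ : ∃ X2 : Finset (Fin n × Fin n) →
      (Fin n → Option (Fin (s + 1))) × (Fin n → Option (Fin (s + 1))) → ℝ,
      X2 = fun ω x => ∏ ij : Fin (s + 1) × Fin (s + 1),
        (1 - containsInd (labelClass x.1 ij.1 ×ˢ labelClass x.2 ij.2) ω) := ⟨_, rfl⟩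
  have hE1 : ∑ ω, bernoulliWeight p ω * ∑ b, X1 ω b ≤ n * 2 ^ n * p ^ (s + 1) := by
    rw [hX1]
    exact sum_bernoulliWeight_degree hp0.le n (s + 1)
  have hE2 : ∑ ω, bernoulliWeight p ω * ∑ x ∈ P, X2 ω x ≤
      (((s + 1 : ℕ) : ℝ) + 1) ^ (2 * n) * (1 - p ^ (M * M)) ^ ((s + 1) * (s + 1)) := by
    rw [hX2]
    exact sum_bernoulliWeight_families hp0.le hp1 P fun x hx => (hPmem x).1 hx
  have hX1n : ∀ ω b, 0 ≤ X1 ω b := fun ω b => by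
    rw [hX1]
    exact sum_nonneg fun U _ => containsInd_nonneg _ _
  have hX2n : ∀ ω x, 0 ≤ X2 ω x := fun ω x => by
    rw [hX2]
    exact prod_nonneg fun ij _ => sub_nonneg.2 (containsInd_le_one _ _)
  obtain ⟨ω, hω⟩ : ∃ ω, ∑ b, X1 ω b + ∑ x ∈ P, X2 ω x < 1 := by
    by_contra hcon
    push Not at hcon
    have hone : ∑ ω : Finset (Fin n × Fin n), bernoulliWeight p ω = 1 := by
      simpa [containsInd_of_subset] using
        sum_bernoulliWeight_contains p (∅ : Finset (Fin n × Fin n))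
    have : ∑ ω : Finset (Fin n × Fin n), bernoulliWeight p ω ≤
        ∑ ω, bernoulliWeight p ω * (∑ b, X1 ω b + ∑ x ∈ P, X2 ω x) :=
      sum_le_sum fun ω _ => le_mul_of_one_le_right (bernoulliWeight_nonneg hp0.le hp1 ω) (hcon ω)
    simp only [mul_add, sum_add_distrib] at this
    linarith
  have hs1 : 0 ≤ ∑ b, X1 ω b := sum_nonneg fun b _ => hX1n ω b
  have hs2 : 0 ≤ ∑ x ∈ P, X2 ω x := sum_nonneg fun x _ => hX2n ω x
  refine ⟨fun b => {a | (a, b) ∈ ω}, fun b => ?_, fun S T hS hT hSc hTc => ?_⟩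
  · by_contra hcard
    obtain ⟨U, hU, hUc⟩ := exists_subset_card_eq (Nat.lt_iff_add_one_le.1 (not_le.1 hcard))
    have hsub : U ×ˢ {b} ⊆ ω := by
      rintro ⟨a, b'⟩ h
      obtain ⟨h1, h2⟩ := mem_product.1 h
      have h3 := hU h1
      simp only [mem_filter, mem_univ, true_and] at h3
      rw [mem_singleton] at h2
      simp only at h2
      rwa [h2]
    have h1 : 1 ≤ X1 ω b := by
      rw [hX1, ← containsInd_of_subset hsub]
      exact single_le_sum (f := fun U => containsInd (U ×ˢ {b}) ω)
        (fun U _ => containsInd_nonneg _ _) (mem_powersetCard.2 ⟨subset_univ U, hUc⟩)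
    have h2 := single_le_sum (f := X1 ω) (fun b _ => hX1n ω b) (mem_univ b)
    linarith
  · obtain ⟨f, rfl⟩ := exists_labelClass_eq S hS
    obtain ⟨g, rfl⟩ := exists_labelClass_eq T hT
    by_contra hno
    push Not at hno
    have h1 : X2 ω (f, g) = 1 := by
      rw [hX2]
      refine prod_eq_one fun ij _ => ?_
      rw [containsInd_of_not_subset, sub_zero]
      intro hsub
      obtain ⟨a, ha, b, hb, hab⟩ := hno ij.1 ij.2
      exact hab (by simpa using hsub (mk_mem_product ha hb))
    have h2 := single_le_sum (f := X2 ω) (fun x _ => hX2n ω x) ((hPmem (f, g)).2 ⟨hSc, hTc⟩)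
    linarith

/-! ### The glued graph and its lists -/

/-- The clique `A = Fin n` together with one clique `{c} × Fin n` for each `c : C`. A vertex `a` of
`A` and a vertex `(c, b)` are adjacent unless `a ∈ N b`; distinct copies are not adjacent. -/
def gluedGraph {n : ℕ} (C : Type) (N : Fin n → Finset (Fin n)) :
    SimpleGraph (Fin n ⊕ C × Fin n) where
  Adj u v := match u, v with
    | .inl a, .inl a' => a ≠ a'
    | .inl a, .inr (_, b) => a ∉ N b
    | .inr (_, b), .inl a => a ∉ N b
    | .inr (c, b), .inr (c', b') => c = c' ∧ b ≠ b'
  symm := ⟨by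
    rintro (a | ⟨c, b⟩) (a' | ⟨c', b'⟩) h
    · exact Ne.symm h
    · exact h
    · exact h
    · exact ⟨h.1.symm, h.2.symm⟩⟩
  loopless := ⟨by
    rintro (a | ⟨c, b⟩) h
    · exact h rfl
    · exact h.2 rfl⟩

lemma not_choosable_gluedGraph {n m : ℕ} (hn : 0 < n) (N : Fin n → Finset (Fin n))
    (hN : ∀ b, m + (N b).card + 1 ≤ 2 * n) :
    ¬ (gluedGraph (Fin n → Fin (2 * n - 1)) N).Choosable m := by
  intro h
  obtain ⟨col, hcol, hadj⟩ := h
    (fun v => match v with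
      | .inl _ => Finset.range (2 * n - 1)
      | .inr (c, b) => Finset.range (2 * n - 1) \ (N b).image fun a => (c a : ℕ)) (by
    rintro (a | ⟨c, b⟩)
    · have := hN a
      simp only [Finset.card_range]
      omega
    · have h1 := hN b
      have h2 : ((N b).image fun a => (c a : ℕ)).card ≤ (N b).card := Finset.card_image_le
      have h3 := Finset.le_card_sdiff ((N b).image fun a => (c a : ℕ)) (Finset.range (2 * n - 1))
      rw [Finset.card_range] at h3
      simp only
      omega)
  have hA : ∀ a : Fin n, col (.inl a) < 2 * n - 1 := fun a => Finset.mem_range.1 (hcol (.inl a))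
  -- The copy of `B` whose lists are adapted to the colouring of `A` at hand.
  let c : Fin n → Fin (2 * n - 1) := fun a => ⟨col (.inl a), hA a⟩
  have hB : ∀ b : Fin n, col (.inr (c, b)) < 2 * n - 1 ∧ ∀ a ∈ N b, col (.inl a) ≠ col (.inr (c, b))
      := by
    intro b
    have := hcol (.inr (c, b))
    simp only [Finset.mem_sdiff, Finset.mem_range, Finset.mem_image, not_exists, not_and] at this
    exact ⟨this.1, fun a ha => this.2 a ha⟩
  have hAB : ∀ a b : Fin n, col (.inl a) ≠ col (.inr (c, b)) := by
    intro a b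
    by_cases hab : a ∈ N b
    · exact (hB b).2 a hab
    · exact hadj (.inl a) (.inr (c, b)) hab
  let g : Fin n ⊕ Fin n → Fin (2 * n - 1) := fun v => match v with
    | .inl a => c a
    | .inr b => ⟨col (.inr (c, b)), (hB b).1⟩
  have hg : Function.Injective g := by
    rintro (a | b) (a' | b') h
    · by_contra hne
      exact hadj (.inl a) (.inl a') (fun e => hne (congrArg _ e)) (Fin.mk.inj h)
    · exact absurd (Fin.mk.inj h) (hAB a b')
    · exact absurd (Fin.mk.inj h).symm (hAB a' b)
    · by_contra hne
      exact hadj (.inr (c, b)) (.inr (c, b')) ⟨rfl, fun e => hne (congrArg _ e)⟩ (Fin.mk.inj h)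
  have := Fintype.card_le_of_injective g hg
  simp only [Fintype.card_sum, Fintype.card_fin] at this
  omega

/-! ### Excluding the minor -/

lemma card_le_of_disjoint {n t k : ℕ} (X : Fin t → Finset (Fin n))
    (hX : Pairwise (Function.onFun Disjoint X)) (P : Finset (Fin t))
    (hP : ∀ i ∈ P, k ≤ (X i).card) : P.card * k ≤ n := by
  classical
  calc P.card * k ≤ ∑ i ∈ P, (X i).card := by
        simpa using Finset.card_nsmul_le_sum P (fun i => (X i).card) k hP
    _ = (P.biUnion X).card := (Finset.card_biUnion fun i _ j _ h => hX h).symm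
    _ ≤ n := by simpa using Finset.card_le_univ (P.biUnion X)

/-- Among more than `2 (n / M)` disjoint subsets of an `n`-element set, more than `n / M` have at
most `M` elements. -/
lemma exists_small {n t M : ℕ} (hM : 0 < M) (X : Fin t → Finset (Fin n))
    (hX : Pairwise (Function.onFun Disjoint X)) (P : Finset (Fin t))
    (hP : 2 * (n / M) + 1 ≤ P.card) :
    ∃ e : Fin (n / M + 1) → Fin t, Function.Injective e ∧ ∀ i, e i ∈ P ∧ (X (e i)).card ≤ M := by
  classical
  have h1 : (P.filter fun i => ¬ (X i).card ≤ M).card ≤ n / M := by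
    rw [Nat.le_div_iff_mul_le hM]
    exact card_le_of_disjoint X hX _ fun i hi => (not_le.1 (Finset.mem_filter.1 hi).2).le
  have h2 := Finset.card_filter_add_card_filter_not (s := P) (fun i => (X i).card ≤ M)
  obtain ⟨Q, hQ, hQc⟩ := Finset.exists_subset_card_eq
    (show n / M + 1 ≤ (P.filter fun i => (X i).card ≤ M).card by omega)
  refine ⟨fun i => Q.orderEmbOfFin hQc i, (Q.orderEmbOfFin hQc).injective, fun i => ?_⟩
  exact Finset.mem_filter.1 (hQ (Q.orderEmbOfFin_mem hQc i))

/-- A connected set of vertices which avoids `A` lies in a single copy of `B`. -/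
lemma exists_copy {n : ℕ} {C : Type} {N : Fin n → Finset (Fin n)} {Z : Set (Fin n ⊕ C × Fin n)}
    (hne : Z.Nonempty) (hc : ((gluedGraph C N).induce Z).Connected) (hA : ∀ a, .inl a ∉ Z) :
    ∃ c, ∀ v ∈ Z, ∃ b, v = .inr (c, b) := by
  obtain ⟨a | ⟨c, b⟩, hu⟩ := hne
  · exact absurd hu (hA a)
  refine ⟨c, fun v hv => ?_⟩
  obtain ⟨w⟩ := hc.preconnected ⟨v, hv⟩ ⟨_, hu⟩
  have key : ∀ x y : Z, ((gluedGraph C N).induce Z).Walk x y →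
      (∃ b, (y : Fin n ⊕ C × Fin n) = .inr (c, b)) →
      ∃ b, (x : Fin n ⊕ C × Fin n) = .inr (c, b) := by
    intro x y w
    induction w with
    | nil => exact id
    | @cons x x' y hxx' _ ih =>
      intro hy
      obtain ⟨b', hb'⟩ := ih hy
      obtain ⟨a | ⟨c'', b''⟩, hx⟩ := x
      · exact absurd hx (hA a)
      · have h : (gluedGraph C N).Adj (.inr (c'', b'')) x' := hxx'
        rw [hb'] at h
        exact ⟨b'', congrArg (fun d => Sum.inr (d, b'')) h.1⟩
  exact key _ _ w ⟨b, rfl⟩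

lemma not_hasKMinor_gluedGraph {n t M : ℕ} (hM : 0 < M) (C : Type) (N : Fin n → Finset (Fin n))
    (hN : ∀ S T : Fin (n / M + 1) → Finset (Fin n),
        Pairwise (Function.onFun Disjoint S) → Pairwise (Function.onFun Disjoint T) →
        (∀ i, (S i).card ≤ M) → (∀ i, (T i).card ≤ M) →
        ∃ i j, ∀ a ∈ S i, ∀ b ∈ T j, a ∈ N b)
    (ht : n + 2 * (n / M) + 1 ≤ t) :
    ¬ (gluedGraph C N).HasKMinor t := by
  classical
  rintro ⟨Z, hne, hdisj, hconn, hadj⟩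
  -- The traces of the branch sets on `A` and, below, on one copy of `B`.
  let X : Fin t → Finset (Fin n) := fun i => {a | .inl a ∈ Z i}
  have hXmem : ∀ i a, a ∈ X i ↔ .inl a ∈ Z i := by simp [X]
  have hX : Pairwise (Function.onFun Disjoint X) := fun i j hij =>
    Finset.disjoint_left.2 fun a ha hb =>
      Set.disjoint_left.1 (hdisj hij) ((hXmem i a).1 ha) ((hXmem j a).1 hb)
  let J : Finset (Fin t) := {i | X i = ∅}
  have hJmem : ∀ i, i ∈ J ↔ X i = ∅ := by simp [J]
  have hJA : ∀ i ∈ J, ∀ a, .inl a ∉ Z i := fun i hi a h => by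
    have h' := (hXmem i a).2 h
    rw [(hJmem i).1 hi] at h'
    exact absurd h' (Finset.notMem_empty _)
  have hJc : t ≤ J.card + n := by
    have h1 : Jᶜ.card * 1 ≤ n := card_le_of_disjoint X hX _ fun i hi =>
      Finset.card_pos.2 (Finset.nonempty_iff_ne_empty.2
        fun h => Finset.mem_compl.1 hi ((hJmem i).2 h))
    have h2 := Finset.card_add_card_compl J
    rw [Fintype.card_fin] at h2
    omega
  obtain ⟨i₀, hi₀⟩ : J.Nonempty := Finset.card_pos.1 (by omega)
  obtain ⟨c, hc⟩ := exists_copy (hne i₀) (hconn i₀) (hJA i₀ hi₀)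
  have hJcopy : ∀ j ∈ J, ∀ v ∈ Z j, ∃ b, v = .inr (c, b) := by
    intro j hj
    by_cases hij : i₀ = j
    · exact hij ▸ hc
    obtain ⟨c', hc'⟩ := exists_copy (hne j) (hconn j) (hJA j hj)
    obtain ⟨u, hu, v, hv, huv⟩ := hadj hij
    obtain ⟨b, rfl⟩ := hc u hu
    obtain ⟨b', rfl⟩ := hc' v hv
    obtain rfl : c = c' := huv.1
    exact hc'
  let Y : Fin t → Finset (Fin n) := fun i => {b | .inr (c, b) ∈ Z i}
  have hYmem : ∀ i b, b ∈ Y i ↔ .inr (c, b) ∈ Z i := by simp [Y]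
  have hY : Pairwise (Function.onFun Disjoint Y) := fun i j hij =>
    Finset.disjoint_left.2 fun a ha hb =>
      Set.disjoint_left.1 (hdisj hij) ((hYmem i a).1 ha) ((hYmem j a).1 hb)
  let I : Finset (Fin t) := {i | Y i = ∅}
  have hImem : ∀ i, i ∈ I ↔ Y i = ∅ := by simp [I]
  have hIB : ∀ i ∈ I, ∀ b, .inr (c, b) ∉ Z i := fun i hi b h => by
    have h' := (hYmem i b).2 h
    rw [(hImem i).1 hi] at h'
    exact absurd h' (Finset.notMem_empty _)
  have hIc : t ≤ I.card + n := by
    have h1 : Iᶜ.card * 1 ≤ n := card_le_of_disjoint Y hY _ fun i hi =>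
      Finset.card_pos.2 (Finset.nonempty_iff_ne_empty.2
        fun h => Finset.mem_compl.1 hi ((hImem i).2 h))
    have h2 := Finset.card_add_card_compl I
    rw [Fintype.card_fin] at h2
    omega
  obtain ⟨e, he, heI⟩ := exists_small hM X hX I (by omega)
  obtain ⟨f, hf, hfJ⟩ := exists_small hM Y hY J (by omega)
  obtain ⟨i, j, hij⟩ := hN (X ∘ e) (Y ∘ f) (fun a b h => hX (he.ne h)) (fun a b h => hY (hf.ne h))
    (fun i => (heI i).2) (fun i => (hfJ i).2)
  have hI := hIB _ (heI i).1
  have hJ := hJcopy _ (hfJ j).1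
  have hne' : e i ≠ f j := by
    intro h
    obtain ⟨v, hv⟩ := hne (f j)
    obtain ⟨b, rfl⟩ := hJ v hv
    exact hI b (h ▸ hv)
  obtain ⟨u, hu, v, hv, huv⟩ := hadj hne'
  obtain ⟨b, rfl⟩ := hJ v hv
  obtain a | ⟨c', b'⟩ := u
  · exact huv (hij a ((hXmem _ a).2 hu) b ((hYmem _ b).2 hv))
  · obtain rfl : c' = c := huv.1
    exact hI b' hu

/-! ### Choice of parameters -/

/-- Main theorem: for every `ε ∈ (0,1)` there is `t₀` such that for every `t ≥ t₀` there
exists a graph with no `K_t`-minor and list chromatic number at least `(2-ε)t` (i.e., it is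
not `m`-choosable for any `m < (2-ε)t`). -/
theorem main_lower_bound :
    ∀ ε ∈ Set.Ioo (0 : ℝ) 1, ∃ t₀ : ℕ, ∀ t : ℕ, t₀ ≤ t →
      ∃ (V : Type) (_ : Fintype V) (G : SimpleGraph V),
        ¬ G.HasKMinor t ∧ ∀ m : ℕ, (m : ℝ) < (2 - ε) * t → ¬ G.Choosable m := by
  rintro ε ⟨hε0, hε1⟩
  obtain ⟨M, hMε⟩ := exists_nat_ge (10 / ε)
  rw [div_le_iff₀ hε0] at hMε
  have hMR : (0 : ℝ) < M := by
    by_contra h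
    nlinarith
  have hM : 0 < M := by exact_mod_cast hMR
  obtain ⟨n₀, hn₀⟩ := exists_nonneighbours M hM
  refine ⟨(M + 3) * (M + n₀), fun t ht => ?_⟩
  -- The largest `n` with `(1 + 3 / M) n ≤ t`.
  set n := t * M / (M + 3) with hn
  have hn1 : n * (M + 3) ≤ t * M := Nat.div_mul_le_self _ _
  have hn2 : t * M < (n + 1) * (M + 3) := (Nat.div_lt_iff_lt_mul (by omega)).1 (Nat.lt_succ_self _)
  have hnM : M + n₀ ≤ n := by
    rw [hn, Nat.le_div_iff_mul_le (by omega)]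
    nlinarith
  obtain ⟨N, hNc, hN⟩ := hn₀ n (le_trans (Nat.le_add_left _ _) hnM)
  have hs1 : 1 ≤ n / M := (Nat.le_div_iff_mul_le hM).2 (by omega)
  have hs2 : n / M * M ≤ n := Nat.div_mul_le_self _ _
  have hnt : n + 3 * (n / M) ≤ t := by
    refine Nat.le_of_mul_le_mul_right ?_ hM
    nlinarith
  refine ⟨_, inferInstance, gluedGraph (Fin n → Fin (2 * n - 1)) N,
    not_hasKMinor_gluedGraph hM _ N hN (by omega), fun m hm => ?_⟩
  refine not_choosable_gluedGraph (by omega) N fun b => ?_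
  have hb := hNc b
  suffices h : m + n / M + 1 ≤ 2 * n by omega
  have hsR : ((n / M : ℕ) : ℝ) * M ≤ n := by exact_mod_cast hs2
  have hn2R : (t : ℝ) * M < (n + 1) * (M + 3) := by exact_mod_cast hn2
  have hnMR : (M : ℝ) ≤ n := by exact_mod_cast (by omega : M ≤ n)
  have hnε : 10 ≤ (n : ℝ) * ε := hMε.trans (by gcongr)
  have hs3 : ((n / M : ℕ) : ℝ) ≤ n * ε / 10 := by
    nlinarith
  have ht3 : (t : ℝ) ≤ (n + 1) * (1 + 3 * ε / 10) := by
    have : (t : ℝ) * M ≤ (n + 1) * (1 + 3 * ε / 10) * M := by nlinarith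
    exact le_of_mul_le_mul_right this hMR
  have hR : (m : ℝ) + (n / M : ℕ) + 1 ≤ 2 * n := by
    have h1 : (2 - ε) * t ≤ (2 - ε) * ((n + 1) * (1 + 3 * ε / 10)) := by
      gcongr; linarith
    have h2 : (2 - ε) * ((n + 1) * (1 + 3 * ε / 10)) ≤ (n + 1) * (2 - 4 * ε / 10) := by
      have h0 : 0 ≤ ((n : ℝ) + 1) * ε ^ 2 := by positivity
      nlinarith
    nlinarith
  exact_mod_cast hR
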